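/- Let h : V → ℝ satisfy h ≥ 0 and h ≢ 0, and let ρ ∈ ℝ with ρ ≠ 0. Then there exists at least one function u : V → ℝ with ∫_V h e^u dμ = 1 solving the fractional mean field equation Lu(x) = ρ( h(x)e^{u(x)} / ∫_V h e^u dμ − 1/|V| ) for every x ∈ V; equivalently, Lu = ρ h e^u − ρ/|V| on V. -/

import Mathlib

open Real Finset

variable {V : Type*}

/-- Discrete integral: `∫_V f dμ = Σ_x μ(x) f(x)`. -/
noncomputable def intV [Fintype V] (μ f : V → ℝ) : ℝ := ∑ x, μ x * f x

/-- Volume `|V| = Σ_x μ(x)`. -/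
noncomputable def volV [Fintype V] (μ : V → ℝ) : ℝ := ∑ x, μ x

/-- The nonlocal (fractional graph Laplacian type) operator
`Lu(x) = (1/μ(x)) Σ_{y ≠ x} W(x,y)(u(x) − u(y))`. -/
noncomputable def opL [Fintype V] [DecidableEq V] (μ : V → ℝ) (W : V → V → ℝ)
    (u : V → ℝ) (x : V) : ℝ :=
  (1 / μ x) * ∑ y ∈ univ.filter (fun y => y ≠ x), W x y * (u x - u y)

/-- Gradient form `∇u·∇v(x) = (1/(2μ(x))) Σ_{y ≠ x} W(x,y)(u(x)−u(y))(v(x)−v(y))`. -/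
noncomputable def gradForm [Fintype V] [DecidableEq V] (μ : V → ℝ) (W : V → V → ℝ)
    (u v : V → ℝ) (x : V) : ℝ :=
  (1 / (2 * μ x)) * ∑ y ∈ univ.filter (fun y => y ≠ x), W x y * (u x - u y) * (v x - v y)

/-- `|∇u|²(x) = ∇u·∇u(x)`. -/
noncomputable def gradSq [Fintype V] [DecidableEq V] (μ : V → ℝ) (W : V → V → ℝ)
    (u : V → ℝ) (x : V) : ℝ := gradForm μ W u u x

/-!
The solutions are the critical points of the energy
`J(u) = ½ ∫ |∇u|² + ρ (|V|⁻¹ ∫ u - log ∫ h eᵘ)`, which does not change when a constant is added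
to `u`. Both terms multiplied by `ρ` grow at most linearly in `‖u‖`, while on functions vanishing
at a base point the Dirichlet energy controls `‖u‖²`, because the graph is connected. Hence `J`
attains its minimum, whatever the sign and size of `ρ`, and a minimizer can be shifted so that
`∫ h eᵘ = 1`.
-/

open Filter

section Integral

variable [Fintype V] {μ f g h : V → ℝ}

lemma volV_pos [Nonempty V] (hμ : ∀ x, 0 < μ x) : 0 < volV μ :=
  Finset.sum_pos (fun x _ => hμ x) univ_nonempty

lemma intV_const (c : ℝ) : intV μ (fun _ => c) = volV μ * c :=
  (Finset.sum_mul ..).symm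

lemma intV_add : intV μ (fun x => f x + g x) = intV μ f + intV μ g := by
  simp only [intV, mul_add, sum_add_distrib]

lemma intV_mul_const (c : ℝ) : intV μ (fun x => f x * c) = intV μ f * c := by
  simp only [intV, sum_mul, mul_assoc]

lemma intV_mono (hμ : ∀ x, 0 ≤ μ x) (hfg : ∀ x, f x ≤ g x) : intV μ f ≤ intV μ g :=
  sum_le_sum fun x _ => mul_le_mul_of_nonneg_left (hfg x) (hμ x)

lemma intV_pos (hμ : ∀ x, 0 < μ x) (hf : ∀ x, 0 ≤ f x) (hne : ∃ x, f x ≠ 0) :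
    0 < intV μ f := by
  obtain ⟨x, hx⟩ := hne
  exact sum_pos' (fun y _ => mul_nonneg (hμ y).le (hf y))
    ⟨x, mem_univ x, mul_pos (hμ x) ((hf x).lt_of_ne' hx)⟩

lemma intV_mul_exp_pos (hμ : ∀ x, 0 < μ x) (hh : ∀ x, 0 ≤ h x) (hne : ∃ x, h x ≠ 0)
    (u : V → ℝ) : 0 < intV μ (fun x => h x * exp (u x)) :=
  intV_pos hμ (fun x => mul_nonneg (hh x) (exp_pos _).le)
    (hne.imp fun _ hx => mul_ne_zero hx (exp_ne_zero _))

lemma intV_mul_exp_add_const (u : V → ℝ) (c : ℝ) :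
    intV μ (fun x => h x * exp (u x + c)) = intV μ (fun x => h x * exp (u x)) * exp c := by
  simp only [exp_add, ← mul_assoc, intV_mul_const]

lemma abs_intV_div_volV_le_norm (hμ : ∀ x, 0 ≤ μ x) (u : V → ℝ) :
    |intV μ u / volV μ| ≤ ‖u‖ := by
  have hvol : 0 ≤ volV μ := sum_nonneg fun x _ => hμ x
  have hle : intV μ u ≤ volV μ * ‖u‖ := by
    rw [← intV_const]
    exact intV_mono hμ fun x => le_of_abs_le (norm_le_pi_norm u x)
  have hge : volV μ * -‖u‖ ≤ intV μ u := by
    rw [← intV_const]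
    exact intV_mono hμ fun x => neg_le_of_abs_le (norm_le_pi_norm u x)
  rw [abs_div, abs_of_nonneg hvol]
  exact div_le_of_le_mul₀ hvol (norm_nonneg u) (abs_le.2 ⟨by linarith, by linarith⟩)

lemma abs_log_intV_mul_exp_sub_log_intV_le_norm (hμ : ∀ x, 0 < μ x) (hh : ∀ x, 0 ≤ h x)
    (hne : ∃ x, h x ≠ 0) (u : V → ℝ) :
    |log (intV μ fun x => h x * exp (u x)) - log (intV μ h)| ≤ ‖u‖ := by
  have hpos : 0 < intV μ h := intV_pos hμ hh hne
  have log_mul_exp (c : ℝ) : log (intV μ h * exp c) = log (intV μ h) + c := by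
    rw [log_mul hpos.ne' (exp_ne_zero c), log_exp]
  have hupper : intV μ (fun x => h x * exp (u x)) ≤ intV μ h * exp ‖u‖ := by
    rw [← intV_mul_const]
    exact intV_mono (fun x => (hμ x).le) fun x => mul_le_mul_of_nonneg_left
      (exp_le_exp.2 (le_of_abs_le (norm_le_pi_norm u x))) (hh x)
  have hlower : intV μ h * exp (-‖u‖) ≤ intV μ (fun x => h x * exp (u x)) := by
    rw [← intV_mul_const]
    exact intV_mono (fun x => (hμ x).le) fun x => mul_le_mul_of_nonneg_left
      (exp_le_exp.2 (neg_le_of_abs_le (norm_le_pi_norm u x))) (hh x)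
  have hlog_upper := log_le_log (intV_mul_exp_pos hμ hh hne u) hupper
  have hlog_lower := log_le_log (by positivity) hlower
  rw [log_mul_exp] at hlog_upper hlog_lower
  exact abs_le.2 ⟨by linarith, by linarith⟩

lemma hasDerivAt_add_smul_apply {ι : Type*} (u v : ι → ℝ) (i : ι) :
    HasDerivAt (fun t : ℝ => (u + t • v) i) (v i) 0 := by
  simpa using ((hasDerivAt_id (0 : ℝ)).mul_const (v i)).const_add (u i)

lemma hasDerivAt_intV {F : ℝ → V → ℝ} {F' : V → ℝ} {t : ℝ}
    (hF : ∀ x, HasDerivAt (fun s => F s x) (F' x) t) :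
    HasDerivAt (fun s => intV μ (F s)) (intV μ F') t :=
  HasDerivAt.fun_sum fun x _ => (hF x).const_mul (μ x)

lemma eq_zero_of_forall_intV_mul_eq_zero (hμ : ∀ x, μ x ≠ 0)
    (hf : ∀ v : V → ℝ, intV μ (fun x => f x * v x) = 0) (x : V) : f x = 0 := by
  classical
  simpa [intV, Pi.single_apply, hμ x] using hf (Pi.single x 1)

end Integral

section Gradient

variable [Fintype V] [DecidableEq V] {μ : V → ℝ} {W : V → V → ℝ}

lemma mul_opL {x : V} (hx : μ x ≠ 0) (u : V → ℝ) :
    μ x * opL μ W u x = ∑ y, W x y * (u x - u y) := by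
  rw [opL, sum_filter_of_ne (by rintro y - hy rfl; simp at hy)]
  field_simp

lemma mul_gradForm {x : V} (hx : μ x ≠ 0) (u v : V → ℝ) :
    μ x * gradForm μ W u v x = 1 / 2 * ∑ y, W x y * (u x - u y) * (v x - v y) := by
  rw [gradForm, sum_filter_of_ne (by rintro y - hy rfl; simp at hy)]
  field_simp

theorem intV_gradForm_eq_intV_opL_mul (hμ : ∀ x, μ x ≠ 0) (hW : ∀ x y, W x y = W y x)
    (u v : V → ℝ) :
    intV μ (gradForm μ W u v) = intV μ (fun x => opL μ W u x * v x) := by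
  have hswap : ∑ x, ∑ y, W x y * (u x - u y) * v y
      = -∑ x, ∑ y, W x y * (u x - u y) * v x := by
    rw [sum_comm]
    simp only [← sum_neg_distrib]
    exact sum_congr rfl fun x _ => sum_congr rfl fun y _ => by rw [hW y x]; ring
  calc intV μ (gradForm μ W u v)
      = 1 / 2 * ∑ x, ∑ y, W x y * (u x - u y) * (v x - v y) := by
        simp only [intV, mul_gradForm (hμ _), mul_sum]
    _ = ∑ x, ∑ y, W x y * (u x - u y) * v x := by
        simp only [mul_sub _ (v _), sum_sub_distrib]
        simp only [hswap]
        ring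
    _ = intV μ (fun x => opL μ W u x * v x) := by
        simp only [intV, ← mul_assoc, mul_opL (hμ _), sum_mul]

lemma gradSq_add_const (u : V → ℝ) (c : ℝ) :
    gradSq μ W (fun x => u x + c) = gradSq μ W u := by
  ext x
  simp only [gradSq, gradForm, add_sub_add_right_eq_sub]

lemma gradSq_smul (t : ℝ) (u : V → ℝ) :
    gradSq μ W (t • u) = fun x => gradSq μ W u x * t ^ 2 := by
  ext x
  simp only [gradSq, gradForm, Pi.smul_apply, smul_eq_mul, mul_sum, sum_mul]
  exact sum_congr rfl fun y _ => by ring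

lemma hasDerivAt_gradSq_add_smul (u v : V → ℝ) (x : V) :
    HasDerivAt (fun t : ℝ => gradSq μ W (u + t • v) x) (2 * gradForm μ W u v x) 0 := by
  have hdiff (y : V) : HasDerivAt (fun t : ℝ => (u + t • v) x - (u + t • v) y) (v x - v y) 0 :=
    (hasDerivAt_add_smul_apply u v x).sub (hasDerivAt_add_smul_apply u v y)
  refine ((HasDerivAt.fun_sum fun y _ =>
    ((hdiff y).const_mul (W x y)).fun_mul (hdiff y)).const_mul (1 / (2 * μ x))).congr_deriv ?_
  simp only [gradForm, mul_sum, zero_smul, add_zero]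
  exact sum_congr rfl fun y _ => by ring

lemma hasDerivAt_half_intV_gradSq_add_smul (hμ : ∀ x, μ x ≠ 0) (hW : ∀ x y, W x y = W y x)
    (u v : V → ℝ) :
    HasDerivAt (fun t : ℝ => 1 / 2 * intV μ (gradSq μ W (u + t • v)))
      (intV μ fun x => opL μ W u x * v x) 0 := by
  refine ((hasDerivAt_intV (hasDerivAt_gradSq_add_smul u v)).const_mul (1 / 2)).congr_deriv ?_
  rw [← intV_gradForm_eq_intV_opL_mul hμ hW, funext fun x => mul_comm 2 (gradForm μ W u v x),
    intV_mul_const]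
  ring

lemma gradSq_nonneg {x : V} (hμ : 0 ≤ μ x) (hW : ∀ y, x ≠ y → 0 ≤ W x y) (u : V → ℝ) :
    0 ≤ gradSq μ W u x := by
  refine mul_nonneg (by positivity) (sum_nonneg fun y hy => ?_)
  rw [mul_assoc]
  exact mul_nonneg (hW y (mem_filter.1 hy).2.symm) (mul_self_nonneg _)

lemma gradSq_pos {x y : V} (hμ : 0 < μ x) (hW : ∀ z, x ≠ z → 0 ≤ W x z) (hxy : 0 < W x y)
    {u : V → ℝ} (hu : u x ≠ u y) : 0 < gradSq μ W u x := by
  have hyx : y ≠ x := by rintro rfl; exact hu rfl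
  refine mul_pos (by positivity) (sum_pos' (fun z hz => ?_) ⟨y, by simp [hyx], ?_⟩)
  · rw [mul_assoc]
    exact mul_nonneg (hW z (mem_filter.1 hz).2.symm) (mul_self_nonneg _)
  · rw [mul_assoc]
    exact mul_pos hxy (mul_self_pos.2 (sub_ne_zero.2 hu))

end Gradient

section Poincare

lemma exists_adj_ne_of_preconnected {α : Type*} {G : SimpleGraph V} (hG : G.Preconnected)
    {u : V → α} {x y : V} (hxy : u x ≠ u y) : ∃ a b, G.Adj a b ∧ u a ≠ u b := by
  obtain ⟨p⟩ := hG x y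
  obtain ⟨d, -, hfst, hsnd⟩ := p.exists_boundary_dart {z | u z = u x} rfl hxy.symm
  exact ⟨d.fst, d.snd, d.adj, fun heq => hsnd (heq.symm.trans hfst)⟩

lemma exists_pos_forall_mul_sq_norm_le {E : Type*} [NormedAddCommGroup E] [NormedSpace ℝ E]
    [ProperSpace E] {q : E → ℝ} (hcont : Continuous q)
    (hsmul : ∀ (t : ℝ) x, q (t • x) = q x * t ^ 2) (hpos : ∀ x, x ≠ 0 → 0 < q x) :
    ∃ c > 0, ∀ x, c * ‖x‖ ^ 2 ≤ q x := by
  obtain ⟨c, hc, hsphere⟩ := (isCompact_sphere (0 : E) 1).exists_forall_le' hcont.continuousOn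
    fun x hx => hpos x (ne_zero_of_mem_unit_sphere ⟨x, hx⟩)
  refine ⟨c, hc, fun x => ?_⟩
  rcases eq_or_ne x 0 with rfl | hx
  · simpa using (hsmul 0 0).ge
  · have hnorm : ‖x‖ ≠ 0 := norm_ne_zero_iff.2 hx
    have hunit : ‖x‖⁻¹ • x ∈ Metric.sphere (0 : E) 1 := by simp [norm_smul, hnorm]
    calc c * ‖x‖ ^ 2 ≤ q (‖x‖⁻¹ • x) * ‖x‖ ^ 2 := by gcongr; exact hsphere _ hunit
      _ = q x := by rw [← hsmul, smul_inv_smul₀ hnorm]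

variable [Fintype V] [DecidableEq V] {G : SimpleGraph V} {μ : V → ℝ} {W : V → V → ℝ}

lemma intV_gradSq_pos_of_preconnected (hG : G.Preconnected) (hμ : ∀ x, 0 < μ x)
    (hW : ∀ x y, x ≠ y → 0 ≤ W x y) (hGW : ∀ x y, G.Adj x y → 0 < W x y)
    {u : V → ℝ} {x y : V} (hxy : u x ≠ u y) : 0 < intV μ (gradSq μ W u) := by
  obtain ⟨a, b, hadj, hab⟩ := exists_adj_ne_of_preconnected hG hxy
  exact intV_pos hμ (fun x => gradSq_nonneg (hμ x).le (hW x) u)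
    ⟨a, (gradSq_pos (hμ a) (hW a) (hGW a b hadj) hab).ne'⟩

theorem exists_pos_forall_mul_sq_norm_le_intV_gradSq_add_sq (hG : G.Preconnected)
    (hμ : ∀ x, 0 < μ x) (hW : ∀ x y, x ≠ y → 0 ≤ W x y)
    (hGW : ∀ x y, G.Adj x y → 0 < W x y) (x₀ : V) :
    ∃ c > 0, ∀ u : V → ℝ, c * ‖u‖ ^ 2 ≤ intV μ (gradSq μ W u) + u x₀ ^ 2 := by
  refine exists_pos_forall_mul_sq_norm_le ?_ (fun t u => ?_) fun u hu => ?_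
  · unfold intV gradSq gradForm
    fun_prop
  · simp only [gradSq_smul, intV_mul_const, Pi.smul_apply, smul_eq_mul]
    ring
  · by_cases hx₀ : u x₀ = 0
    · obtain ⟨y, hy⟩ := Function.ne_iff.1 hu
      have hne : u y ≠ u x₀ := by rwa [hx₀]
      linarith [intV_gradSq_pos_of_preconnected hG hμ hW hGW hne, sq_nonneg (u x₀)]
    · have hnonneg : 0 ≤ intV μ (gradSq μ W u) := sum_nonneg fun x _ =>
        mul_nonneg (hμ x).le (gradSq_nonneg (hμ x).le (hW x) u)
      positivity

end Poincare

section Energy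

lemma tendsto_mul_sq_sub_mul_sub_atTop {a : ℝ} (ha : 0 < a) (b c : ℝ) :
    Tendsto (fun t : ℝ => a * t ^ 2 - b * t - c) atTop atTop := by
  have hlinear : Tendsto (fun t : ℝ => a * t - b) atTop atTop :=
    tendsto_atTop_add_const_right _ _ (tendsto_id.const_mul_atTop ha)
  exact (tendsto_atTop_add_const_right _ (-c) (tendsto_id.atTop_mul_atTop₀ hlinear)).congr
    fun t => by simp only [id]; ring

variable [Fintype V] [DecidableEq V] {μ : V → ℝ} {W : V → V → ℝ} {h : V → ℝ}

/-- The energy functional `J(u) = ½ ∫ |∇u|² + ρ (|V|⁻¹ ∫ u - log ∫ h eᵘ)` whose Euler–Lagrange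
equation is the mean field equation. The constraint `∫ h eᵘ = 1` is not imposed: it is replaced by
the invariance of `J` under the addition of constants. -/
noncomputable def meanFieldEnergy (μ : V → ℝ) (W : V → V → ℝ) (h : V → ℝ) (ρ : ℝ)
    (u : V → ℝ) : ℝ :=
  1 / 2 * intV μ (gradSq μ W u)
    + ρ * (intV μ u / volV μ - log (intV μ fun x => h x * exp (u x)))

lemma continuous_meanFieldEnergy (hμ : ∀ x, 0 < μ x) (hh : ∀ x, 0 ≤ h x) (hne : ∃ x, h x ≠ 0)
    (ρ : ℝ) : Continuous (meanFieldEnergy μ W h ρ) := by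
  have hlog : Continuous fun u : V → ℝ => log (intV μ fun x => h x * exp (u x)) :=
    Continuous.log (by unfold intV; fun_prop) fun u => (intV_mul_exp_pos hμ hh hne u).ne'
  have hgrad : Continuous fun u : V → ℝ => intV μ (gradSq μ W u) := by
    unfold intV gradSq gradForm
    fun_prop
  have hint : Continuous (intV μ) := by
    unfold intV
    fun_prop
  unfold meanFieldEnergy
  fun_prop

lemma meanFieldEnergy_add_const (hμ : ∀ x, 0 < μ x) (hh : ∀ x, 0 ≤ h x)
    (hne : ∃ x, h x ≠ 0) (ρ : ℝ) (u : V → ℝ) (c : ℝ) :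
    meanFieldEnergy μ W h ρ (fun x => u x + c) = meanFieldEnergy μ W h ρ u := by
  have : Nonempty V := hne.nonempty
  have hvol : volV μ ≠ 0 := (volV_pos hμ).ne'
  rw [meanFieldEnergy, gradSq_add_const, intV_add, intV_const, intV_mul_exp_add_const,
    log_mul (intV_mul_exp_pos hμ hh hne u).ne' (exp_ne_zero c), log_exp, add_div,
    mul_div_cancel_left₀ c hvol, add_sub_add_right_eq_sub, meanFieldEnergy]

lemma le_meanFieldEnergy (hμ : ∀ x, 0 < μ x) (hh : ∀ x, 0 ≤ h x) (hne : ∃ x, h x ≠ 0)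
    (ρ : ℝ) (u : V → ℝ) :
    1 / 2 * intV μ (gradSq μ W u) - 2 * |ρ| * ‖u‖ - ρ * log (intV μ h)
      ≤ meanFieldEnergy μ W h ρ u := by
  have hmean := abs_intV_div_volV_le_norm (fun x => (hμ x).le) u
  have hlog := abs_log_intV_mul_exp_sub_log_intV_le_norm hμ hh hne u
  set m := intV μ u / volV μ
  set d := log (intV μ fun x => h x * exp (u x)) - log (intV μ h) with hd
  have hρ : |ρ * (m - d)| ≤ |ρ| * (‖u‖ + ‖u‖) := by
    rw [abs_mul]
    gcongr
    exact (abs_sub m d).trans (add_le_add hmean hlog)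
  have henergy : meanFieldEnergy μ W h ρ u
      = 1 / 2 * intV μ (gradSq μ W u) + ρ * (m - d) - ρ * log (intV μ h) := by
    rw [meanFieldEnergy, hd]
    ring
  linarith [neg_abs_le (ρ * (m - d))]

theorem exists_forall_meanFieldEnergy_le {G : SimpleGraph V} (hG : G.Preconnected)
    (hμ : ∀ x, 0 < μ x) (hW : ∀ x y, x ≠ y → 0 ≤ W x y) (hGW : ∀ x y, G.Adj x y → 0 < W x y)
    (hh : ∀ x, 0 ≤ h x) (hne : ∃ x, h x ≠ 0) (ρ : ℝ) :
    ∃ u, ∀ v, meanFieldEnergy μ W h ρ u ≤ meanFieldEnergy μ W h ρ v := by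
  obtain ⟨x₀⟩ : Nonempty V := hne.nonempty
  -- The penalty makes the energy coercive; it vanishes after shifting a competitor to `0` at `x₀`.
  let penalized (u : V → ℝ) : ℝ := meanFieldEnergy μ W h ρ u + 1 / 2 * u x₀ ^ 2
  have hcont : Continuous penalized := by
    have := continuous_meanFieldEnergy (W := W) hμ hh hne ρ
    fun_prop
  have hcoercive : Tendsto penalized (cocompact (V → ℝ)) atTop := by
    obtain ⟨c, hc, hpoincare⟩ :=
      exists_pos_forall_mul_sq_norm_le_intV_gradSq_add_sq hG hμ hW hGW x₀
    have hquadratic :=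
      tendsto_mul_sq_sub_mul_sub_atTop (half_pos hc) (2 * |ρ|) (ρ * log (intV μ h))
    refine tendsto_atTop_mono (fun u => ?_)
      (hquadratic.comp (tendsto_norm_cocompact_atTop (E := V → ℝ)))
    simp only [Function.comp_apply, penalized]
    linarith [hpoincare u, le_meanFieldEnergy (W := W) hμ hh hne ρ u]
  obtain ⟨u, hu⟩ := hcont.exists_forall_le hcoercive
  refine ⟨u, fun v => ?_⟩
  calc meanFieldEnergy μ W h ρ u ≤ penalized u := le_add_of_nonneg_right (by positivity)
    _ ≤ penalized (fun x => v x + -v x₀) := hu _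
    _ = meanFieldEnergy μ W h ρ v := by
      simp only [penalized, meanFieldEnergy_add_const hμ hh hne, add_neg_cancel]
      ring

lemma hasDerivAt_meanFieldEnergy_add_smul (hμ : ∀ x, μ x ≠ 0) (hW : ∀ x y, W x y = W y x)
    (ρ : ℝ) {u : V → ℝ} (hu : intV μ (fun x => h x * exp (u x)) ≠ 0) (v : V → ℝ) :
    HasDerivAt (fun t : ℝ => meanFieldEnergy μ W h ρ (u + t • v))
      (intV μ fun x => (opL μ W u x - ρ * (h x * exp (u x) /
        intV μ (fun y => h y * exp (u y)) - 1 / volV μ)) * v x) 0 := by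
  have hmean : HasDerivAt (fun t : ℝ => intV μ (u + t • v) / volV μ) (intV μ v / volV μ) 0 :=
    (hasDerivAt_intV (hasDerivAt_add_smul_apply u v)).div_const (volV μ)
  have hlog : HasDerivAt (fun t : ℝ => log (intV μ fun x => h x * exp ((u + t • v) x)))
      (intV μ (fun x => h x * (exp (u x) * v x)) / intV μ (fun x => h x * exp (u x))) 0 := by
    simpa using (hasDerivAt_intV (μ := μ) fun x =>
      (hasDerivAt_add_smul_apply u v x).exp.const_mul (h x)).log (by simpa using hu)
  refine ((hasDerivAt_half_intV_gradSq_add_smul hμ hW u v).fun_add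
    ((hmean.fun_sub hlog).const_mul ρ)).congr_deriv ?_
  set I := intV μ fun x => h x * exp (u x)
  simp only [intV, sum_div, mul_sum, ← sum_sub_distrib, ← sum_add_distrib]
  exact sum_congr rfl fun x _ => by ring

theorem opL_eq_of_isLocalMin_meanFieldEnergy (hμ : ∀ x, μ x ≠ 0) (hW : ∀ x y, W x y = W y x)
    {ρ : ℝ} {u : V → ℝ} (hu : intV μ (fun x => h x * exp (u x)) ≠ 0)
    (hmin : IsLocalMin (meanFieldEnergy μ W h ρ) u) (x : V) :
    opL μ W u x =
      ρ * (h x * exp (u x) / intV μ (fun y => h y * exp (u y)) - 1 / volV μ) := by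
  have hmin_line (v : V → ℝ) : IsLocalMin (fun t : ℝ => meanFieldEnergy μ W h ρ (u + t • v)) 0 :=
    IsLocalMin.comp_continuous (f := meanFieldEnergy μ W h ρ) (g := fun t : ℝ => u + t • v)
      (by simpa using hmin) (by fun_prop)
  have hcritical (v : V → ℝ) := (hmin_line v).hasDerivAt_eq_zero
    (hasDerivAt_meanFieldEnergy_add_smul hμ hW ρ hu v)
  exact sub_eq_zero.1 (eq_zero_of_forall_intV_mul_eq_zero hμ hcritical x)

end Energy

theorem mean_field_nonneg_h_general [Fintype V] [DecidableEq V] {G : SimpleGraph V}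
    (hG : G.Preconnected) (μ : V → ℝ) (W : V → V → ℝ)
    (hμ : ∀ x, 0 < μ x)
    (hWsym : ∀ x y, W x y = W y x)
    (hWnonneg : ∀ x y, x ≠ y → 0 ≤ W x y)
    (hGW : ∀ x y, G.Adj x y → 0 < W x y)
    (h : V → ℝ) (hh : ∀ x, 0 ≤ h x) (hne : ∃ x, h x ≠ 0) (ρ : ℝ) :
    ∃ u : V → ℝ, intV μ (fun x => h x * Real.exp (u x)) = 1 ∧
      ∀ x : V, opL μ W u x =
        ρ * (h x * Real.exp (u x) / intV μ (fun y => h y * Real.exp (u y)) - 1 / volV μ) := by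
  obtain ⟨u, hu⟩ := exists_forall_meanFieldEnergy_le hG hμ hWnonneg hGW hh hne ρ
  set I := intV μ (fun x => h x * exp (u x))
  have hI : 0 < I := intV_mul_exp_pos hμ hh hne u
  have hnormalized : intV μ (fun x => h x * exp (u x + -log I)) = 1 := by
    rw [intV_mul_exp_add_const, exp_neg, exp_log hI, mul_inv_cancel₀ hI.ne']
  have hmin : IsLocalMin (meanFieldEnergy μ W h ρ) (fun x => u x + -log I) :=
    .of_forall fun v => (meanFieldEnergy_add_const hμ hh hne ρ u _).trans_le (hu v)
  exact ⟨_, hnormalized, opL_eq_of_isLocalMin_meanFieldEnergy (fun x => (hμ x).ne') hWsym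
    (intV_mul_exp_pos hμ hh hne _).ne' hmin⟩

/-- For `0 ≤ h ≢ 0` and `ρ ≠ 0`, the fractional mean field equation has at least one solution
`u` normalized by `∫_V h e^u dμ = 1`. -/
theorem mean_field_nonneg_h [Fintype V] [Nonempty V] [DecidableEq V]
    (μ : V → ℝ) (W : V → V → ℝ)
    (hμ : ∀ x, 0 < μ x)
    (hWsym : ∀ x y, W x y = W y x)
    (hWpos : ∀ x y, x ≠ y → 0 < W x y)
    (h : V → ℝ) (hh : ∀ x, 0 ≤ h x) (hne : ∃ x, h x ≠ 0)
    (ρ : ℝ) (hρ : ρ ≠ 0) :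
    ∃ u : V → ℝ, intV μ (fun x => h x * Real.exp (u x)) = 1 ∧
      ∀ x : V, opL μ W u x =
        ρ * (h x * Real.exp (u x) / intV μ (fun y => h y * Real.exp (u y)) - 1 / volV μ) :=
  mean_field_nonneg_h_general SimpleGraph.preconnected_top μ W hμ hWsym
    (fun x y hxy => (hWpos x y hxy).le) (fun x y hxy => hWpos x y hxy) h hh hne ρ
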